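/- Forward action of the ternary purified permutation-function oracle. Let N ≥ 1 and ω₃ := exp(2πi/3). Let spfo be the unitary on ℓ²([N] × S_N × {0,1,2}^{[N]}) determined on the standard basis by spfo(δ_{(x,π,f)}) = ω₃^{f(x)} · δ_{(π(x),π,f)}. Let L, R be tuples of pairs in [N]×[N] of lengths ℓ, r with ℓ+r < N such that the concatenation L⌢R is bijective, and define pf_{L,R} ∈ ℓ²(S_N × {0,1,2}^{[N]}) by pf_{L,R}(π,f) := (1/√((N−ℓ−r)!)) · 𝟙[π(x)=y for every pair (x,y) occurring in L or R] · (1/√(3^N)) · ω₃^{Σ_{(x,y)∈L} f(x) − Σ_{(x,y)∈R} f(x)}. Then for every x ∈ [N] that does not occur as an x-coordinate of any pair in L or R: spfo(δ_x ⊗ pf_{L,R}) = (1/√(N−ℓ−r)) · Σ_{y∈[N], y not a y-coordinate of any pair in L or R} δ_y ⊗ pf_{L⌢(x,y), R}, where L⌢(x,y) is L with the pair (x,y) appended. -/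

import Mathlib

/-!
The oracle permutes the standard basis up to phases, so its output at `(π x', π, f)` is the phase
of `f x'` times the value of its argument at `(x', π, f)`. On `δ_x ⊗ pf_{L,R}` this vanishes unless
`x' = x` and `π` extends `L` and `R`, that is, unless `π` extends `L⌢(x, π x)` and `R`; since `x` is
fresh and `π` is injective, `π x` is then fresh as well. The phase of `f x` is the factor that the
new pair contributes, and `(n + 1)! = (n + 1) · n!` gives the change of normalisation.
-/

open Finset

/-- `ω₃ = exp(2πi/3)`. -/
noncomputable def omega3 : ℂ := Complex.exp (2 * Real.pi * Complex.I / 3)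

/-- The ternary pf-relation vector `pf_{L,R} ∈ ℓ²(S_N × {0,1,2}^{[N]})`:
`pf_{L,R}(π,f) = (1/√((N−ℓ−r)!)) · 𝟙[π x = y for all (x,y) in L or R] · (1/√(3^N)) ·
ω₃^{Σ_{(x,y)∈L} f(x) − Σ_{(x,y)∈R} f(x)}`. -/
noncomputable def pf3Vec (N ℓ r : ℕ) (L : Fin ℓ → Fin N × Fin N)
    (R : Fin r → Fin N × Fin N) :
    Equiv.Perm (Fin N) × (Fin N → Fin 3) → ℂ :=
  fun q =>
    (Real.sqrt ((N - (ℓ + r)).factorial) : ℂ)⁻¹ *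
      (if (∀ i, q.1 (L i).1 = (L i).2) ∧ (∀ j, q.1 (R j).1 = (R j).2) then 1 else 0) *
      (Real.sqrt (3 ^ N) : ℂ)⁻¹ *
      omega3 ^ ((∑ i, ((q.2 (L i).1 : ℕ) : ℤ)) - ∑ j, ((q.2 (R j).1 : ℕ) : ℤ))

/-- A tuple of pairs is bijective if its first coordinates are pairwise distinct and its
second coordinates are pairwise distinct. -/
def IsBijTuple {N t : ℕ} (p : Fin t → Fin N × Fin N) : Prop :=
  Function.Injective (fun i => (p i).1) ∧ Function.Injective (fun i => (p i).2)

/-- The standard basis vector `δ_a` of `ℓ²(X)`. -/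
def deltaVec {X : Type*} [DecidableEq X] (a : X) : X → ℂ :=
  fun b => if b = a then 1 else 0

theorem deltaVec_eq_single {X : Type*} [DecidableEq X] (a : X) :
    deltaVec a = Pi.single a 1 := by
  funext b
  simp only [deltaVec, Pi.single_apply]

theorem apply_of_map_single_eq_smul_single {ι κ S : Type*} [Finite ι] [DecidableEq ι]
    [DecidableEq κ] [CommSemiring S] {T : (ι → S) →ₗ[S] κ → S} {σ : ι → κ} {c : ι → S}
    (hσ : Function.Injective σ) (hT : ∀ i, T (Pi.single i 1) = c i • Pi.single (σ i) 1)
    (v : ι → S) (i : ι) : T v (σ i) = c i * v i := by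
  cases nonempty_fintype ι
  calc T v (σ i) = ∑ j, v j * (c j * Pi.single (M := fun _ => S) (σ j) 1 (σ i)) := by
        conv_lhs => rw [pi_eq_sum_univ' v]
        simp only [map_sum, map_smul, hT, Finset.sum_apply, Pi.smul_apply, smul_eq_mul]
    _ = c i * v i := by
        simp [Pi.single_apply, hσ.eq_iff, mul_comm]

theorem inv_sqrt_factorial_succ (n : ℕ) :
    (√((n + 1).factorial))⁻¹ = (√(n + 1 : ℝ))⁻¹ * (√n.factorial)⁻¹ := by
  rw [Nat.factorial_succ, Nat.cast_mul, Nat.cast_succ, Real.sqrt_mul (by positivity), mul_inv]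

section PermOracle

variable {X A : Type*} {ℓ r : ℕ} {L : Fin ℓ → X × X} {R : Fin r → X × X} {x : X}

theorem injective_perm_apply_prodMk :
    Function.Injective fun q : X × Equiv.Perm X × A => (q.2.1 q.1, q.2) := by
  rintro ⟨x₁, π, f⟩ ⟨x₂, π', f'⟩ h
  obtain ⟨hx, rfl, rfl⟩ : π x₁ = π' x₂ ∧ π = π' ∧ f = f' := by simpa only [Prod.mk.injEq] using h
  rw [π.injective hx]

/-- The permutation `π` extends the partial function given by the pairs of the tuple `p`. -/
abbrev PermExtends {t : ℕ} (π : Equiv.Perm X) (p : Fin t → X × X) : Prop :=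
  ∀ i, π (p i).1 = (p i).2

theorem permExtends_snoc {π : Equiv.Perm X} {y : X} :
    PermExtends π (Fin.snoc (α := fun _ => X × X) L (x, y)) ↔ PermExtends π L ∧ π x = y := by
  simp only [PermExtends, Fin.forall_fin_succ', Fin.snoc_castSucc, Fin.snoc_last]

theorem PermExtends.snd_ne_apply {π : Equiv.Perm X} (h : PermExtends π L)
    (hx : ∀ i, (L i).1 ≠ x) (i : Fin ℓ) : (L i).2 ≠ π x :=
  fun hi => hx i (π.injective ((h i).trans hi))

variable [Fintype X] [DecidableEq X]

/-- The vector `pf_{L,R} ∈ ℓ²(S_X × A^X)` of the purified permutation-function oracle on a finite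
set `X`, for functions with values in a finite alphabet `A` whose letter `a` is encoded by the phase
`e a`. The ternary vector `pf3Vec` is the case `X = [N]`, `A = {0,1,2}`, `e a = ω₃ ^ a`. -/
noncomputable def pfVec [Fintype A] (e : A → Circle) (L : Fin ℓ → X × X) (R : Fin r → X × X) :
    Equiv.Perm X × (X → A) → ℂ :=
  fun q =>
    (√((Fintype.card X - (ℓ + r)).factorial) : ℂ)⁻¹ *
      (if PermExtends q.1 L ∧ PermExtends q.1 R then 1 else 0) *
      (√(Fintype.card A ^ Fintype.card X) : ℂ)⁻¹ *
      ((∏ i, e (q.2 (L i).1)) / ∏ j, e (q.2 (R j).1) : Circle)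

theorem pfVec_eq_zero_of_not_permExtends [Fintype A] {e : A → Circle} {π : Equiv.Perm X} {f : X → A}
    (h : ¬ (PermExtends π L ∧ PermExtends π R)) : pfVec e L R (π, f) = 0 := by
  simp only [pfVec, if_neg h, mul_zero, zero_mul]

theorem mul_pfVec_eq_pfVec_snoc [Fintype A] (e : A → Circle) (hlen : ℓ + r < Fintype.card X)
    (L : Fin ℓ → X × X) (R : Fin r → X × X) (x : X) (π : Equiv.Perm X) (f : X → A) :
    e (f x) * pfVec e L R (π, f) =
      (√(Fintype.card X - (ℓ + r)) : ℂ)⁻¹ * pfVec e (Fin.snoc L (x, π x)) R (π, f) := by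
  obtain ⟨k, hk⟩ : ∃ k, Fintype.card X = ℓ + r + k + 1 := Nat.exists_eq_add_of_lt hlen
  have hnorm : (√((Fintype.card X - (ℓ + r)).factorial) : ℂ)⁻¹ =
      (√(Fintype.card X - (ℓ + r)) : ℂ)⁻¹ *
        (√((Fintype.card X - (ℓ + 1 + r)).factorial) : ℂ)⁻¹ := by
    have hsucc : Fintype.card X - (ℓ + r) = k + 1 := by lia
    have hpred : Fintype.card X - (ℓ + 1 + r) = k := by lia
    have hcast : (Fintype.card X : ℝ) - (ℓ + r) = k + 1 := by rw [hk]; push_cast; ring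
    rw [hsucc, hpred, hcast]
    exact_mod_cast inv_sqrt_factorial_succ k
  simp only [pfVec, hnorm, permExtends_snoc, and_true, Fin.prod_univ_castSucc, Fin.snoc_castSucc,
    Fin.snoc_last, Circle.coe_div, Circle.coe_mul]
  ring

theorem oracle_apply [Finite A] [DecidableEq A] {e : A → Circle}
    {T : (X × Equiv.Perm X × (X → A) → ℂ) →ₗ[ℂ] (X × Equiv.Perm X × (X → A) → ℂ)}
    (hT : ∀ (x' : X) (π : Equiv.Perm X) (f : X → A),
      T (deltaVec (x', π, f)) = (e (f x') : ℂ) • deltaVec (π x', π, f))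
    (v : X × Equiv.Perm X × (X → A) → ℂ) (x : X) (π : Equiv.Perm X) (f : X → A) :
    T v (π x, π, f) = e (f x) * v (x, π, f) :=
  apply_of_map_single_eq_smul_single (c := fun q => (e (q.2.2 q.1) : ℂ))
    injective_perm_apply_prodMk
    (fun q => by simpa only [deltaVec_eq_single] using hT q.1 q.2.1 q.2.2) v (x, π, f)

theorem spfo_forward_action_general [Fintype A] [DecidableEq A] (e : A → Circle)
    (hlen : ℓ + r < Fintype.card X) (hxL : ∀ i, (L i).1 ≠ x) (hxR : ∀ j, (R j).1 ≠ x)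
    (T : (X × Equiv.Perm X × (X → A) → ℂ) →ₗ[ℂ] (X × Equiv.Perm X × (X → A) → ℂ))
    (hT : ∀ (x' : X) (π : Equiv.Perm X) (f : X → A),
      T (deltaVec (x', π, f)) = (e (f x') : ℂ) • deltaVec (π x', π, f)) :
    T (fun q => deltaVec x q.1 * pfVec e L R q.2) =
      fun q => (√(Fintype.card X - (ℓ + r)) : ℂ)⁻¹ *
        (if (∃ i, (L i).2 = q.1) ∨ (∃ j, (R j).2 = q.1) then 0
         else pfVec e (Fin.snoc L (x, q.1)) R q.2) := by
  funext ⟨y, π, f⟩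
  obtain ⟨x', rfl⟩ := π.surjective y
  rw [oracle_apply hT]
  obtain rfl | hne := eq_or_ne x' x
  · have hfresh (hπ : PermExtends π L ∧ PermExtends π R) :
        ¬ ((∃ i, (L i).2 = π x') ∨ ∃ j, (R j).2 = π x') := by
      rintro (⟨i, hi⟩ | ⟨j, hj⟩)
      · exact hπ.1.snd_ne_apply hxL i hi
      · exact hπ.2.snd_ne_apply hxR j hj
    simp only [deltaVec, if_true, one_mul]
    split_ifs with hused
    · rw [pfVec_eq_zero_of_not_permExtends fun hπ => hfresh hπ hused, mul_zero, mul_zero]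
    · exact mul_pfVec_eq_pfVec_snoc e hlen L R x' π f
  · have hsnoc : pfVec e (Fin.snoc L (x, π x')) R (π, f) = 0 :=
      pfVec_eq_zero_of_not_permExtends fun hπ => hne (π.injective (permExtends_snoc.1 hπ.1).2).symm
    simp only [deltaVec, if_neg hne, zero_mul, mul_zero, hsnoc, ite_self]

end PermOracle

/-- The phases `ω₃ ^ a` encoding the letters `a ∈ {0,1,2}` of the ternary oracle, as elements of the
unit circle. -/
noncomputable def ternaryPhase (a : Fin 3) : Circle :=
  Circle.exp (2 * Real.pi / 3) ^ (a : ℕ)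

theorem coe_ternaryPhase (a : Fin 3) : (ternaryPhase a : ℂ) = omega3 ^ (a : ℕ) := by
  rw [ternaryPhase, Circle.coe_pow, Circle.coe_exp, omega3]
  congr 2
  push_cast
  ring

theorem coe_prod_ternaryPhase {ι : Type*} (s : Finset ι) (g : ι → Fin 3) :
    ((∏ i ∈ s, ternaryPhase (g i) : Circle) : ℂ) = omega3 ^ (∑ i ∈ s, ((g i : ℕ) : ℤ)) := by
  rw [← Nat.cast_sum, zpow_natCast, ← Finset.prod_pow_eq_pow_sum]
  exact (map_prod Circle.coeHom _ _).trans (Finset.prod_congr rfl fun i _ => coe_ternaryPhase (g i))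

theorem pf3Vec_eq_pfVec {N ℓ r : ℕ} (L : Fin ℓ → Fin N × Fin N) (R : Fin r → Fin N × Fin N) :
    pf3Vec N ℓ r L R = pfVec ternaryPhase L R := by
  have homega : omega3 ≠ 0 := Complex.exp_ne_zero _
  funext q
  simp only [pf3Vec, pfVec, PermExtends, Fintype.card_fin, Circle.coe_div, coe_prod_ternaryPhase,
    zpow_sub₀ homega, Nat.cast_ofNat]

/-- **Forward action of the ternary purified permutation-function oracle.**
If `T` is the linear map determined on the standard basis of
`ℓ²([N] × S_N × {0,1,2}^{[N]})` by `T δ_{(x,π,f)} = ω₃^{f(x)} δ_{(π(x),π,f)}`, then for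
tuples `L, R` with `ℓ + r < N` whose concatenation is bijective and every `x ∈ [N]` not
occurring as an x-coordinate in `L` or `R`,
`T (δ_x ⊗ pf_{L,R}) = (1/√(N−ℓ−r)) Σ_{y not a y-coordinate of L or R} δ_y ⊗ pf_{L⌢(x,y),R}`. -/
theorem spfo_forward_action (N ℓ r : ℕ) (hN : 1 ≤ N) (hlen : ℓ + r < N)
    (L : Fin ℓ → Fin N × Fin N) (R : Fin r → Fin N × Fin N)
    (hbij : IsBijTuple (Fin.append L R))
    (x : Fin N) (hxL : ∀ i, (L i).1 ≠ x) (hxR : ∀ j, (R j).1 ≠ x)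
    (T : ((Fin N × Equiv.Perm (Fin N) × (Fin N → Fin 3)) → ℂ) →ₗ[ℂ]
          ((Fin N × Equiv.Perm (Fin N) × (Fin N → Fin 3)) → ℂ))
    (hT : ∀ (x' : Fin N) (π : Equiv.Perm (Fin N)) (f : Fin N → Fin 3),
      T (deltaVec (x', π, f)) = (omega3 ^ ((f x' : ℕ))) • deltaVec (π x', π, f)) :
    T (fun q => deltaVec x q.1 * pf3Vec N ℓ r L R q.2) =
      fun q => (Real.sqrt (N - (ℓ + r)) : ℂ)⁻¹ *
        (if (∃ i, (L i).2 = q.1) ∨ (∃ j, (R j).2 = q.1) then 0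
         else pf3Vec N (ℓ + 1) r (Fin.snoc L (x, q.1)) R q.2) := by
  simpa only [pf3Vec_eq_pfVec, Fintype.card_fin] using
    spfo_forward_action_general ternaryPhase (by rwa [Fintype.card_fin]) hxL hxR T
      (by simpa only [coe_ternaryPhase] using hT)
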